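/- arXiv:2405.08589 — 3 statements merged into one kernel-verified Lean document; each statement's English description precedes it below -/
import Mathlib

section
/- Let x̲ ≤ x ≤ x̄ and y̲ ≤ y ≤ ȳ be real numbers. Then max{x̲·y + x·y̲ − x̲·y̲, x̄·y + x·ȳ − x̄·ȳ} ≤ x·y; that is, both McCormick linear underestimators x̲·y + x·y̲ − x̲·y̲ and x̄·y + x·ȳ − x̄·ȳ are lower bounds for the bilinear monomial x·y on the rectangle [x̲, x̄] × [y̲, ȳ]. -/
/-- McCormick underestimators: both linear underestimators are lower bounds
for the bilinear monomial `x*y` on the rectangle. -/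
theorem mccormick_max_le (xl x xu yl y yu : ℝ)
    (hx1 : xl ≤ x) (hx2 : x ≤ xu) (hy1 : yl ≤ y) (hy2 : y ≤ yu) :
    max (xl * y + x * yl - xl * yl) (xu * y + x * yu - xu * yu) ≤ x * y := by
  apply max_le
  · nlinarith [mul_nonneg (sub_nonneg.2 hx1) (sub_nonneg.2 hy1)]
  · nlinarith [mul_nonneg (sub_nonneg.2 hx2) (sub_nonneg.2 hy2)]
end

section
/- Let x̲ < x̄ and y̲ < ȳ be real numbers, and define g(x, y) = max{x̲·y + x·y̲ − x̲·y̲, x̄·y + x·ȳ − x̄·ȳ}. Then g is the convex envelope of the bilinear monomial f(x, y) = x·y on the rectangle [x̲, x̄] × [y̲, ȳ]: (i) g is convex on the rectangle, (ii) g(x, y) ≤ x·y for all (x, y) in the rectangle, and (iii) for every function h : ℝ² → ℝ that is convex on the rectangle and satisfies h(x, y) ≤ x·y for all (x, y) in the rectangle, one has h(x, y) ≤ g(x, y) for all (x, y) in the rectangle. -/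
/-- Jensen's inequality for three points. -/
lemma jensen_three {S : Set (ℝ × ℝ)} {h : ℝ × ℝ → ℝ} (hc : ConvexOn ℝ S h)
    {a b c : ℝ × ℝ} (ha : a ∈ S) (hb : b ∈ S) (hcS : c ∈ S) {u v w : ℝ}
    (hu : 0 ≤ u) (hv : 0 ≤ v) (hw : 0 ≤ w) (hs : u + v + w = 1) :
    h (u • a + v • b + w • c) ≤ u * h a + v * h b + w * h c := by
  have := hc.map_sum_le (t := Finset.univ) (w := ![u, v, w]) (p := ![a, b, c])
    (by intro i _; fin_cases i <;> simpa) (by simp [Fin.sum_univ_three, hs])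
    (by intro i _; fin_cases i <;> simpa)
  simpa [Fin.sum_univ_three] using this

/-- The maximum of the two McCormick underestimators is the convex envelope of
the bilinear monomial `x*y` on the rectangle `[xl, xu] × [yl, yu]`. -/
theorem mccormick_convex_envelope (xl xu yl yu : ℝ)
    (hx : xl < xu) (hy : yl < yu) :
    let S : Set (ℝ × ℝ) := (Set.Icc xl xu) ×ˢ (Set.Icc yl yu)
    let g : ℝ × ℝ → ℝ := fun p =>
      max (xl * p.2 + p.1 * yl - xl * yl) (xu * p.2 + p.1 * yu - xu * yu)
    ConvexOn ℝ S g ∧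
    (∀ p ∈ S, g p ≤ p.1 * p.2) ∧
    (∀ h : ℝ × ℝ → ℝ, ConvexOn ℝ S h → (∀ p ∈ S, h p ≤ p.1 * p.2) →
      ∀ p ∈ S, h p ≤ g p) := by
  intro S g
  have hS : Convex ℝ S := (convex_Icc xl xu).prod (convex_Icc yl yu)
  have aff : ∀ a b : ℝ, ConvexOn ℝ S (fun p : ℝ × ℝ => a * p.2 + p.1 * b - a * b) := by
    intro a b
    refine ⟨hS, ?_⟩
    intro p _ q _ s t _ _ hst
    obtain rfl : t = 1 - s := by linarith
    apply le_of_eq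
    simp only [Prod.fst_add, Prod.snd_add, Prod.smul_fst, Prod.smul_snd, smul_eq_mul]
    ring
  refine ⟨(aff xl yl).sup (aff xu yu), ?_, ?_⟩
  · rintro ⟨x, y⟩ ⟨⟨h1, h2⟩, ⟨h3, h4⟩⟩
    dsimp only at h1 h2 h3 h4
    apply max_le
    · dsimp only
      linarith [mul_nonneg (sub_nonneg.2 h1) (sub_nonneg.2 h3)]
    · dsimp only
      linarith [mul_nonneg (sub_nonneg.2 h2) (sub_nonneg.2 h4)]
  · rintro h hc hle ⟨x, y⟩ ⟨⟨h1, h2⟩, ⟨h3, h4⟩⟩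
    dsimp only at h1 h2 h3 h4
    have mll : (xl, yl) ∈ S := ⟨⟨le_rfl, hx.le⟩, ⟨le_rfl, hy.le⟩⟩
    have mlu : (xl, yu) ∈ S := ⟨⟨le_rfl, hx.le⟩, ⟨hy.le, le_rfl⟩⟩
    have mul' : (xu, yl) ∈ S := ⟨⟨hx.le, le_rfl⟩, ⟨le_rfl, hy.le⟩⟩
    have muu : (xu, yu) ∈ S := ⟨⟨hx.le, le_rfl⟩, ⟨hy.le, le_rfl⟩⟩
    have dx : 0 < xu - xl := sub_pos.2 hx
    have dy : 0 < yu - yl := sub_pos.2 hy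
    obtain ⟨s, hs⟩ : ∃ s, s = (x - xl) / (xu - xl) := ⟨_, rfl⟩
    obtain ⟨t, ht⟩ : ∃ t, t = (y - yl) / (yu - yl) := ⟨_, rfl⟩
    have s0 : 0 ≤ s := hs ▸ div_nonneg (sub_nonneg.2 h1) dx.le
    have t0 : 0 ≤ t := ht ▸ div_nonneg (sub_nonneg.2 h3) dy.le
    have s1 : s ≤ 1 := by rw [hs, div_le_one dx]; linarith
    have t1 : t ≤ 1 := by rw [ht, div_le_one dy]; linarith
    obtain rfl : x = xl + s * (xu - xl) := by rw [hs]; field_simp; ring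
    obtain rfl : y = yl + t * (yu - yl) := by rw [ht]; field_simp; ring
    clear hs ht
    rcases le_total (s + t) 1 with hst | hst
    · refine le_trans ?_ (le_max_left _ _)
      have J := jensen_three hc mll mul' mlu (u := 1 - s - t) (v := s) (w := t)
        (by linarith) s0 t0 (by ring)
      have e : (1 - s - t) • (xl, yl) + s • (xu, yl) + t • (xl, yu)
          = (xl + s * (xu - xl), yl + t * (yu - yl)) := by
        ext <;> simp <;> ring
      rw [e] at J
      have k1 := mul_le_mul_of_nonneg_left (hle _ mll) (show 0 ≤ 1 - s - t by linarith)
      have k2 := mul_le_mul_of_nonneg_left (hle _ mul') s0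
      have k3 := mul_le_mul_of_nonneg_left (hle _ mlu) t0
      dsimp only at k1 k2 k3 ⊢
      linarith
    · refine le_trans ?_ (le_max_right _ _)
      have J := jensen_three hc muu mul' mlu (u := s + t - 1) (v := 1 - t) (w := 1 - s)
        (by linarith) (by linarith) (by linarith) (by ring)
      have e : (s + t - 1) • (xu, yu) + (1 - t) • (xu, yl) + (1 - s) • (xl, yu)
          = (xl + s * (xu - xl), yl + t * (yu - yl)) := by
        ext <;> simp <;> ring
      rw [e] at J
      have k1 := mul_le_mul_of_nonneg_left (hle _ muu) (show 0 ≤ s + t - 1 by linarith)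
      have k2 := mul_le_mul_of_nonneg_left (hle _ mul') (show 0 ≤ 1 - t by linarith)
      have k3 := mul_le_mul_of_nonneg_left (hle _ mlu) (show 0 ≤ 1 - s by linarith)
      dsimp only at k1 k2 k3 ⊢
      linarith
end

section
/- Let x̲ ≤ x ≤ x̄ and y̲ ≤ y ≤ ȳ be real numbers. Then the approximation gap of the averaged McCormick lower bound satisfies 0 ≤ x·y − ½·((x̲·y + x·y̲ − x̲·y̲) + (x̄·y + x·ȳ − x̄·ȳ)) ≤ (x̄ − x̲)·(ȳ − y̲). In particular, the gap tends to zero as the width x̄ − x̲ of the x-interval tends to zero, uniformly over y ∈ [y̲, ȳ], so branching on the single variable x suffices for convergence of the lower bound. -/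
/-- The approximation gap of the averaged McCormick lower bound is nonnegative
and bounded by the product of the interval widths; hence branching on the
single variable `x` suffices for convergence of the lower bound. -/
theorem averaged_mccormick_gap_bounds (xl x xu yl y yu : ℝ)
    (hx1 : xl ≤ x) (hx2 : x ≤ xu) (hy1 : yl ≤ y) (hy2 : y ≤ yu) :
    0 ≤ x * y - (1 / 2) * ((xl * y + x * yl - xl * yl) + (xu * y + x * yu - xu * yu)) ∧
    x * y - (1 / 2) * ((xl * y + x * yl - xl * yl) + (xu * y + x * yu - xu * yu))
      ≤ (xu - xl) * (yu - yl) := by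
  have h1 := mul_nonneg (sub_nonneg.2 hx1) (sub_nonneg.2 hy1)
  have h2 := mul_nonneg (sub_nonneg.2 hx2) (sub_nonneg.2 hy2)
  have h3 := mul_nonneg (sub_nonneg.2 hx1) (sub_nonneg.2 hy2)
  have h4 := mul_nonneg (sub_nonneg.2 hx2) (sub_nonneg.2 hy1)
  constructor <;> linarith
end
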